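/- Let k ≥ 2 and 0 ≤ ℓ ≤ 2k−2 be integers, let a, b, c ∈ ℤ with a > 0 and d := b²−4ac < 0, and let τ₀ := (−b+i√|d|)/(2a) ∈ ℍ be the associated CM point of discriminant d. Then |d|^{(k−1)/2} · (R_{2−2k}^{k−1}(τ^ℓ))(τ₀) is a rational number, where the iterated raising operator is applied to the function τ ↦ τ^ℓ and then evaluated at τ₀. -/

import Mathlib

open Complex MeasureTheory
open scoped Real

noncomputable section

namespace LHMF

abbrev SL2Z := Matrix.SpecialLinearGroup (Fin 2) ℤ

/-- Möbius action of `SL₂(ℤ)` on `ℂ`. -/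
def moeb (M : SL2Z) (τ : ℂ) : ℂ :=
  ((M.1 0 0 : ℂ) * τ + (M.1 0 1 : ℂ)) / ((M.1 1 0 : ℂ) * τ + (M.1 1 1 : ℂ))

/-- Automorphy factor `j(M,τ) = cτ + d`. -/
def jfac (M : SL2Z) (τ : ℂ) : ℂ := (M.1 1 0 : ℂ) * τ + (M.1 1 1 : ℂ)

/-- `E₁`: union of all `SL₂(ℤ)`-translates of the positive imaginary axis. -/
def E1 : Set ℂ := ⋃ M : SL2Z, (fun y : ℝ => moeb M ((y : ℂ) * Complex.I)) '' Set.Ioi 0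

/-- Wirtinger derivative `∂f/∂τ`. -/
def dtau (f : ℂ → ℂ) (τ : ℂ) : ℂ :=
  (fderiv ℝ f τ 1 - Complex.I * fderiv ℝ f τ Complex.I) / 2

/-- Wirtinger derivative `∂f/∂τ̄`. -/
def dtaubar (f : ℂ → ℂ) (τ : ℂ) : ℂ :=
  (fderiv ℝ f τ 1 + Complex.I * fderiv ℝ f τ Complex.I) / 2

/-- The operator `ξ_κ f = 2i v^κ conj(∂f/∂τ̄)`. -/
def xiOp (κ : ℤ) (f : ℂ → ℂ) (τ : ℂ) : ℂ :=
  2 * Complex.I * ((τ.im : ℂ) ^ κ) * starRingEnd ℂ (dtaubar f τ)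

/-- The operator `𝒟 = (1/(2πi)) ∂/∂τ`. -/
def Dop (f : ℂ → ℂ) : ℂ → ℂ := fun τ => (2 * (π : ℂ) * Complex.I)⁻¹ * dtau f τ

/-- Maass raising operator of weight `κ`. -/
def raiseOp (κ : ℤ) (f : ℂ → ℂ) (τ : ℂ) : ℂ :=
  2 * Complex.I * dtau f τ + (κ : ℂ) * (τ.im : ℂ)⁻¹ * f τ

/-- Iterated raising operator `R_κ^m = R_{κ+2m-2} ∘ ⋯ ∘ R_{κ+2} ∘ R_κ`. -/
def raiseIter (κ : ℤ) : ℕ → (ℂ → ℂ) → (ℂ → ℂ)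
  | 0 => fun f => f
  | m + 1 => fun f => raiseOp (κ + 2 * m) (raiseIter κ m f)

/-- Petersson's Poincaré series `H_{k,k-1}(z,τ)`. -/
def Hpet (k : ℕ) (z τ : ℂ) : ℂ :=
  ∑' M : SL2Z, jfac M τ ^ (2 * k - 2) * ((moeb M τ).im : ℂ) ^ (2 * k - 1) *
    (z - moeb M τ)⁻¹ * (z - starRingEnd ℂ (moeb M τ)) ^ (1 - 2 * (k : ℤ))

/-- The locally harmonic Maass form `H_{1-k,n}`. -/
def Hlhmf (k n : ℕ) (τ : ℂ) : ℂ :=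
  (2 * Complex.I) ^ (2 * k - 2) / (2 * (π : ℂ)) *
    ∫ y in Set.Ioi (0 : ℝ), Hpet k ((y : ℂ) * Complex.I) τ * (y : ℂ) ^ n

/-- The cusp form `R_n` of weight `2k`. -/
def Rnform (k n : ℕ) (τ : ℂ) : ℂ :=
  (2 : ℂ) ^ (2 * k - 3) / (Complex.I ^ (2 * k - 1 - n) * (Nat.choose (2 * k - 2) n : ℂ) * (π : ℂ)) *
    ∑' M : SL2Z, jfac M τ ^ (-2 * (k : ℤ)) * moeb M τ ^ (-(n : ℤ) - 1)

/-- Holomorphic Eichler integral of `f` (weight `2k`), along a vertical path. -/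
def eichlerHol (k : ℕ) (f : ℂ → ℂ) (τ : ℂ) : ℂ :=
  (-2 * (π : ℂ) * Complex.I) ^ (2 * k - 1) / (Nat.factorial (2 * k - 2) : ℂ) *
    ∫ t in Set.Ioi (0 : ℝ), f (τ + (t : ℂ) * Complex.I) * ((t : ℂ) * Complex.I) ^ (2 * k - 2) *
      Complex.I

/-- Non-holomorphic Eichler integral `f^*` of `f` (weight `2k`), along a vertical path. -/
def eichlerStar (k : ℕ) (f : ℂ → ℂ) (τ : ℂ) : ℂ :=
  (-2 * Complex.I) ^ (1 - 2 * (k : ℤ)) *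
    ∫ t in Set.Ioi (0 : ℝ),
      starRingEnd ℂ (f (-(starRingEnd ℂ (-(starRingEnd ℂ τ) + (t : ℂ) * Complex.I)))) *
        (-(starRingEnd ℂ τ) + (t : ℂ) * Complex.I + τ) ^ (2 * k - 2) * Complex.I

/-- Bernoulli polynomial evaluated at a complex number. -/
def bernC (m : ℕ) (τ : ℂ) : ℂ := Polynomial.aeval τ (Polynomial.bernoulli m)

/-- Periodized Bernoulli polynomial `𝔹_m(τ) = B_m(τ - ⌊Re τ⌋)`. -/
def bernPer (m : ℕ) (τ : ℂ) : ℂ := bernC m (τ - (⌊τ.re⌋ : ℂ))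

/-- The period `r_n(E_{2k})` of the Eisenstein series, for `0 < n < 2k-2`. -/
def rnE (k n : ℕ) : ℚ :=
  if n % 2 = 0 then 0
  else (-1) ^ ((n - 1) / 2) * (2 * (k : ℚ)) * bernoulli (n + 1) * bernoulli (2 * k - 1 - n) /
    (bernoulli (2 * k) * ((n : ℚ) + 1) * ((2 * k - 1 - n : ℕ) : ℚ))

/-- The local polynomial `P_{1-k,n}`. -/
def Ppoly (k n : ℕ) (τ : ℂ) : ℂ :=
  (rnE k n : ℂ)
  + (-Complex.I) ^ (n + 1) / ((n : ℂ) + 1) * bernPer (n + 1) τ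
  + Complex.I ^ (n + 1) / ((2 * k - 1 - n : ℕ) : ℂ) * bernPer (2 * k - 1 - n) τ
  + Complex.I ^ (1 - (n : ℤ)) / 2 *
      ∑' M : {M : SL2Z // 0 < M.1 0 0 * M.1 1 0 ∧ (moeb M τ).re < 0},
        jfac M.1 τ ^ (2 * k - 2) *
          (moeb M.1 τ ^ n - (-1 : ℂ) ^ n * moeb M.1 τ ^ (2 * k - 2 - n))

/-- The binary quadratic form `[a,b,c]` evaluated at complex arguments. -/
def qfC (a b c : ℤ) (x y : ℂ) : ℂ := (a : ℂ) * x ^ 2 + (b : ℂ) * x * y + (c : ℂ) * y ^ 2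

/-- CM point of the positive definite form `[a,b,c]`. -/
def cmPoint (a b c : ℤ) : ℂ :=
  (-(b : ℂ) + Complex.I * ((Real.sqrt (((b ^ 2 - 4 * a * c).natAbs : ℝ))) : ℂ)) / (2 * (a : ℂ))

/-- The form `[a,b,c] ∘ M`. -/
def qfComp (a b c : ℤ) (M : SL2Z) : ℤ × ℤ × ℤ :=
  (a * (M.1 0 0) ^ 2 + b * (M.1 0 0) * (M.1 1 0) + c * (M.1 1 0) ^ 2,
   2 * a * (M.1 0 0) * (M.1 0 1) + b * ((M.1 0 0) * (M.1 1 1) + (M.1 0 1) * (M.1 1 0)) +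
     2 * c * (M.1 1 0) * (M.1 1 1),
   a * (M.1 0 1) ^ 2 + b * (M.1 0 1) * (M.1 1 1) + c * (M.1 1 1) ^ 2)

/-- `w_P`: order of the stabilizer of `P = [a,b,c]` in `PSL₂(ℤ)` (half the order of the
stabilizer in `SL₂(ℤ)`, which contains `±1`). -/
def wP (a b c : ℤ) : ℕ := Nat.card {M : SL2Z // qfComp a b c M = (a, b, c)} / 2

/-- The meromorphic modular form `f_{k,P}` for `P = [a,b,c]`. -/
def fkP (k : ℕ) (a b c : ℤ) (z : ℂ) : ℂ :=
  (((((b ^ 2 - 4 * a * c).natAbs : ℝ)) ^ ((k : ℝ) - 1 / 2) : ℝ) : ℂ) /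
      (2 * (π : ℂ) * (wP a b c : ℂ)) *
    ∑' M : SL2Z, (qfC a b c ((M.1 0 0 : ℂ) * z + (M.1 0 1 : ℂ))
      ((M.1 1 0 : ℂ) * z + (M.1 1 1 : ℂ))) ^ (-(k : ℤ))

/-- The `n`-th period `r_n(f) = ∫₀^∞ f(iy) y^n dy`. -/
def periodN (n : ℕ) (f : ℂ → ℂ) : ℂ :=
  ∫ y in Set.Ioi (0 : ℝ), f ((y : ℂ) * Complex.I) * (y : ℂ) ^ n

/-- Epstein zeta function of `[a,b,c]` at an integer `k`. -/
def epstein (a b c : ℤ) (k : ℕ) : ℝ :=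
  ∑' p : {p : ℤ × ℤ // p ≠ (0, 0)},
    ((a * p.1.1 ^ 2 + b * p.1.1 * p.1.2 + c * p.1.2 ^ 2 : ℤ) : ℝ) ^ (-(k : ℤ))

/-- `sgn(M)` for `M = (a,b;c,d)`: `sgn(ac)` if `ac ≠ 0`, else `sgn(bd)`. -/
def sgnM (M : SL2Z) : ℤ :=
  if M.1 0 0 * M.1 1 0 ≠ 0 then Int.sign (M.1 0 0 * M.1 1 0) else Int.sign (M.1 0 1 * M.1 1 1)

/-- Upper incomplete Gamma function `Γ(s,x)` for a natural number `s`. -/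
def GammaUpper (s : ℕ) (x : ℝ) : ℝ := ∫ t in Set.Ioi x, Real.exp (-t) * t ^ (s - 1)

/-- A cusp form of weight `2k` for `SL₂(ℤ)`, as a function on `ℂ` (holomorphic on `ℍ`,
modular of weight `2k`, vanishing at the cusp `i∞`). -/
def IsCuspForm2k (k : ℕ) (f : ℂ → ℂ) : Prop :=
  (∀ τ : ℂ, 0 < τ.im → DifferentiableAt ℂ f τ) ∧
  (∀ (M : SL2Z) (τ : ℂ), 0 < τ.im → f (moeb M τ) = jfac M τ ^ (2 * k) * f τ) ∧
  Filter.Tendsto f (Filter.comap Complex.im Filter.atTop) (nhds 0)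

/-! With `h_{p,q}(z) = (X + z)^p (X + z̄)^q`, the identity
`(z - z̄) h_{p,q} = h_{p+1,q} - h_{p,q+1}` makes the weight `-(p+1)` raising operator send
`h_{p+1,q}` to `-(p+1) v⁻¹ h_{p,q+1}`, and multiplication by `v⁻¹` only shifts the weight. So the
`m`-fold raising operator in weight `-2m` carries `(X + z)^{2m}`, whose coefficients are multiples
of the powers of `z`, to a rational multiple of `v^{-m} ((X + z)(X + z̄))^m`. At a CM point
`(X + z)(X + z̄)` has rational coefficients, and `v` is a rational multiple of `√|d|`. -/

section WirtingerDerivative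

/-- `f` is real differentiable at `z` with Wirtinger derivative `∂f/∂τ = f'`. Differentiability is
part of the notion because `dtau` is built on the junk-valued `fderiv`. -/
structure HasWirtingerDerivAt (f : ℂ → ℂ) (f' z : ℂ) : Prop where
  differentiableAt : DifferentiableAt ℝ f z
  dtau_eq : dtau f z = f'

variable {f g : ℂ → ℂ} {f' g' z : ℂ}

theorem HasWirtingerDerivAt.of_hasFDerivAt {L : ℂ →L[ℝ] ℂ} (hf : HasFDerivAt f L z)
    (hL : (L 1 - I * L I) / 2 = f') : HasWirtingerDerivAt f f' z :=
  ⟨hf.differentiableAt, by rw [dtau, hf.fderiv, hL]⟩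

theorem hasWirtingerDerivAt_const (a z : ℂ) : HasWirtingerDerivAt (fun _ => a) 0 z :=
  .of_hasFDerivAt (hasFDerivAt_const a z) (by simp)

theorem hasWirtingerDerivAt_id (z : ℂ) : HasWirtingerDerivAt (fun w => w) 1 z :=
  .of_hasFDerivAt (hasFDerivAt_id z) (by simp)

theorem hasWirtingerDerivAt_conj (z : ℂ) : HasWirtingerDerivAt (starRingEnd ℂ) 0 z :=
  .of_hasFDerivAt (conjCLE : ℂ →L[ℝ] ℂ).hasFDerivAt (by simp)

theorem hasWirtingerDerivAt_comp_im {φ : ℝ → ℂ} {φ' : ℂ} (hφ : HasDerivAt φ φ' z.im) :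
    HasWirtingerDerivAt (fun w => φ w.im) (-I / 2 * φ') z :=
  .of_hasFDerivAt (hφ.hasFDerivAt.comp z imCLM.hasFDerivAt) <| by
    simp only [ContinuousLinearMap.comp_apply, ContinuousLinearMap.toSpanSingleton_apply,
      imCLM_apply, one_im, I_im, zero_smul, one_smul]
    ring

theorem HasWirtingerDerivAt.mul (hf : HasWirtingerDerivAt f f' z)
    (hg : HasWirtingerDerivAt g g' z) :
    HasWirtingerDerivAt (fun w => f w * g w) (f' * g z + f z * g') z :=
  .of_hasFDerivAt (hf.differentiableAt.hasFDerivAt.mul hg.differentiableAt.hasFDerivAt) <| by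
    rw [← hf.dtau_eq, ← hg.dtau_eq, dtau, dtau]
    simp only [add_apply, smul_apply, smul_eq_mul]
    ring

theorem HasWirtingerDerivAt.sum {ι : Type*} {s : Finset ι} {F : ι → ℂ → ℂ} {F' : ι → ℂ}
    (hF : ∀ i ∈ s, HasWirtingerDerivAt (F i) (F' i) z) :
    HasWirtingerDerivAt (fun w => ∑ i ∈ s, F i w) (∑ i ∈ s, F' i) z := by
  refine .of_hasFDerivAt (HasFDerivAt.fun_sum fun i hi => (hF i hi).differentiableAt.hasFDerivAt) ?_
  simp only [sum_apply, Finset.mul_sum, ← Finset.sum_sub_distrib, Finset.sum_div]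
  exact Finset.sum_congr rfl fun i hi => (hF i hi).dtau_eq

theorem hasWirtingerDerivAt_im_zpow (s : ℤ) (hz : z.im ≠ 0) :
    HasWirtingerDerivAt (fun w => (w.im : ℂ) ^ s) (-I / 2 * (s * (z.im : ℂ) ^ (s - 1))) z :=
  hasWirtingerDerivAt_comp_im <|
    (hasDerivAt_zpow s (z.im : ℂ) (.inl (ofReal_ne_zero.2 hz))).comp_ofReal

end WirtingerDerivative

section Raising

variable {f g : ℂ → ℂ} {z : ℂ}

theorem raiseOp_congr (κ : ℤ) (h : f =ᶠ[nhds z] g) : raiseOp κ f z = raiseOp κ g z := by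
  simp only [raiseOp, dtau, h.fderiv_eq, h.eq_of_nhds]

theorem raiseOp_const_mul (κ : ℤ) (a : ℂ) (f : ℂ → ℂ) (z : ℂ) :
    raiseOp κ (fun w => a * f w) z = a * raiseOp κ f z := by
  have h : fderiv ℝ (fun w => a * f w) z = a • fderiv ℝ f z :=
    congrFun (fderiv_const_smul_field (f := f) a) z
  simp only [raiseOp, dtau, h, smul_apply, smul_eq_mul]
  ring

theorem raiseIter_const_mul (κ : ℤ) (m : ℕ) (a : ℂ) (f : ℂ → ℂ) :
    raiseIter κ m (fun w => a * f w) = fun w => a * raiseIter κ m f w := by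
  induction m with
  | zero => rfl
  | succ m ih =>
    funext z
    simp only [raiseIter, ih, raiseOp_const_mul]

theorem raiseOp_im_zpow_mul (κ s : ℤ) (hf : DifferentiableAt ℝ f z) (hz : z.im ≠ 0) :
    raiseOp κ (fun w => (w.im : ℂ) ^ s * f w) z = (z.im : ℂ) ^ s * raiseOp (κ + s) f z := by
  have hprod := (hasWirtingerDerivAt_im_zpow s hz).mul ⟨hf, rfl⟩
  rw [raiseOp, raiseOp, hprod.dtau_eq, zpow_sub_one₀ (ofReal_ne_zero.2 hz)]
  push_cast
  linear_combination -(s * (z.im : ℂ) ^ s * (z.im : ℂ)⁻¹ * f z) * I_sq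

end Raising

section PolynomialFamilies

open Polynomial

/-- The family of polynomials `w ↦ F w` has coefficientwise Wirtinger derivative `F'` at `z`. -/
def HasCoeffWirtingerDerivAt (F : ℂ → ℂ[X]) (F' : ℂ[X]) (z : ℂ) : Prop :=
  ∀ k, HasWirtingerDerivAt (fun w => (F w).coeff k) (F'.coeff k) z

variable {F G : ℂ → ℂ[X]} {F' G' : ℂ[X]} {z : ℂ}

theorem HasCoeffWirtingerDerivAt.mul (hF : HasCoeffWirtingerDerivAt F F' z)
    (hG : HasCoeffWirtingerDerivAt G G' z) :
    HasCoeffWirtingerDerivAt (fun w => F w * G w) (F' * G z + F z * G') z := by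
  intro k
  simp only [coeff_mul, coeff_add, ← Finset.sum_add_distrib]
  exact .sum fun ij _ => (hF ij.1).mul (hG ij.2)

theorem HasCoeffWirtingerDerivAt.pow (hF : HasCoeffWirtingerDerivAt F F' z) (n : ℕ) :
    HasCoeffWirtingerDerivAt (fun w => F w ^ n) (n * F z ^ (n - 1) * F') z := by
  induction n with
  | zero => exact fun k => by simpa using hasWirtingerDerivAt_const ((1 : ℂ[X]).coeff k) z
  | succ n ih =>
    simp only [pow_succ]
    convert ih.mul hF using 1
    cases n with
    | zero => simp
    | succ n => simp only [Nat.add_sub_cancel]; push_cast; ring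

theorem HasWirtingerDerivAt.X_add_C {f : ℂ → ℂ} {f' : ℂ} (hf : HasWirtingerDerivAt f f' z) :
    HasCoeffWirtingerDerivAt (fun w => X + C (f w)) (C f') z := by
  rintro (_ | k)
  · simpa using hf
  · simpa [coeff_C] using hasWirtingerDerivAt_const ((X : ℂ[X]).coeff (k + 1)) z

/-- The polynomial `(X + z)^p (X + z̄)^q`, whose coefficients, as functions of `z`, span a space
stable under raising up to powers of `Im z`. -/
def conjPow (p q : ℕ) (z : ℂ) : ℂ[X] := (X + C z) ^ p * (X + C (starRingEnd ℂ z)) ^ q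

theorem hasCoeffWirtingerDerivAt_conjPow (p q : ℕ) (z : ℂ) :
    HasCoeffWirtingerDerivAt (conjPow p q) (C (p : ℂ) * conjPow (p - 1) q z) z := by
  convert ((hasWirtingerDerivAt_id z).X_add_C.pow p).mul
    ((hasWirtingerDerivAt_conj z).X_add_C.pow q) using 1
  · rfl
  · simp only [conjPow, map_natCast, map_one, map_zero]
    ring

theorem two_I_im_mul_coeff_conjPow (p q k : ℕ) (z : ℂ) :
    2 * I * z.im * (conjPow p q z).coeff k =
      (conjPow (p + 1) q z).coeff k - (conjPow p (q + 1) z).coeff k := by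
  have him : 2 * I * z.im = z - starRingEnd ℂ z := by
    rw [sub_conj]; push_cast; ring
  rw [him, ← coeff_C_mul, ← coeff_sub]
  congr 1
  simp only [conjPow, map_sub]
  ring

theorem raiseOp_coeff_conjPow (p q k : ℕ) {z : ℂ} (hz : z.im ≠ 0) :
    raiseOp (-(p + 1)) (fun w => (conjPow (p + 1) q w).coeff k) z =
      -(p + 1) * ((z.im : ℂ)⁻¹ * (conjPow p (q + 1) z).coeff k) := by
  have hz' : (z.im : ℂ) ≠ 0 := ofReal_ne_zero.2 hz
  rw [raiseOp, (hasCoeffWirtingerDerivAt_conjPow (p + 1) q z k).dtau_eq, coeff_C_mul,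
    Nat.add_sub_cancel]
  push_cast
  field_simp
  linear_combination two_I_im_mul_coeff_conjPow p q k z

theorem raiseIter_coeff_conjPow (p m k : ℕ) {z : ℂ} (hz : z.im ≠ 0) :
    raiseIter (-(p + m : ℕ)) m (fun w => (conjPow (p + m) 0 w).coeff k) z =
      (-1) ^ m * (p + m).descFactorial m * ((z.im : ℂ) ^ (-m : ℤ) * (conjPow p m z).coeff k) := by
  induction m generalizing p z with
  | zero => simp [raiseIter]
  | succ m ih =>
    have him : ∀ᶠ w in nhds z, w.im ≠ 0 := continuous_im.continuousAt.eventually_ne hz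
    have hweight : -((p + 1 + m : ℕ) : ℤ) + 2 * m + -m = -(p + 1) := by push_cast; ring
    have hfactor : (p + 1 + m).descFactorial (m + 1) = (p + 1) * (p + 1 + m).descFactorial m := by
      rw [Nat.descFactorial_succ, Nat.add_sub_cancel]
    rw [show p + (m + 1) = p + 1 + m by omega]
    calc raiseIter (-(p + 1 + m : ℕ)) (m + 1) (fun w => (conjPow (p + 1 + m) 0 w).coeff k) z
      _ = raiseOp (-(p + 1 + m : ℕ) + 2 * m) (fun w => (-1) ^ m * (p + 1 + m).descFactorial m *
            ((w.im : ℂ) ^ (-m : ℤ) * (conjPow (p + 1) m w).coeff k)) z :=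
          raiseOp_congr _ (him.mono fun w hw => ih (p + 1) hw)
      _ = (-1) ^ m * (p + 1 + m).descFactorial m * ((z.im : ℂ) ^ (-m : ℤ) *
            raiseOp (-(p + 1)) (fun w => (conjPow (p + 1) m w).coeff k) z) := by
          rw [raiseOp_const_mul, raiseOp_im_zpow_mul _ _
            (hasCoeffWirtingerDerivAt_conjPow (p + 1) m z k).differentiableAt hz, hweight]
      _ = (-1) ^ (m + 1) * (p + 1 + m).descFactorial (m + 1) *
            ((z.im : ℂ) ^ (-(m + 1 : ℕ) : ℤ) * (conjPow p (m + 1) z).coeff k) := by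
          rw [raiseOp_coeff_conjPow p m k hz, hfactor, zpow_neg, zpow_neg, zpow_natCast,
            zpow_natCast, pow_succ (z.im : ℂ), mul_inv]
          push_cast
          ring

theorem raiseIter_pow {p m ℓ : ℕ} (hℓ : ℓ ≤ p + m) {z : ℂ} (hz : z.im ≠ 0) :
    raiseIter (-(p + m : ℕ)) m (fun w => w ^ ℓ) z =
      (-1) ^ m * (p + m).descFactorial m / (p + m).choose ℓ *
        ((z.im : ℂ) ^ (-m : ℤ) * (conjPow p m z).coeff (p + m - ℓ)) := by
  have hchoose : ((p + m).choose ℓ : ℂ) ≠ 0 := mod_cast (Nat.choose_pos hℓ).ne'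
  have hcoeff : (fun w => (conjPow (p + m) 0 w).coeff (p + m - ℓ)) =
      fun w => ((p + m).choose ℓ : ℂ) * w ^ ℓ := by
    funext w
    rw [conjPow, pow_zero, mul_one, coeff_X_add_C_pow, Nat.sub_sub_self hℓ, Nat.choose_symm hℓ,
      mul_comm]
  have hraise := raiseIter_coeff_conjPow p m (p + m - ℓ) hz
  rw [hcoeff, raiseIter_const_mul] at hraise
  field_simp
  linear_combination hraise

theorem coeff_conjPow_self_mem (K : Subring ℂ) (htrace : z + starRingEnd ℂ z ∈ K)
    (hnorm : z * starRingEnd ℂ z ∈ K) (m k : ℕ) : (conjPow m m z).coeff k ∈ K := by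
  have hquad : (X + C z) * (X + C (starRingEnd ℂ z)) =
      X ^ 2 + C (z + starRingEnd ℂ z) * X + C (z * starRingEnd ℂ z) := by
    simp only [map_add, map_mul]
    ring
  have hlifts {a : ℂ} (ha : a ∈ K) : C a ∈ lifts K.subtype := C_mem_lifts K.subtype ⟨a, ha⟩
  have hmem : conjPow m m z ∈ lifts K.subtype := by
    rw [conjPow, ← mul_pow, hquad]
    exact pow_mem (add_mem (add_mem (X_pow_mem_lifts _ 2)
      (mul_mem (hlifts htrace) (X_mem_lifts _))) (hlifts hnorm)) m
  simpa using (lifts_iff_coeff_lifts _).1 hmem k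

theorem im_pow_mul_raiseIter_pow_mem (K : Subfield ℂ) (hz : z.im ≠ 0)
    (htrace : z + starRingEnd ℂ z ∈ K) (hnorm : z * starRingEnd ℂ z ∈ K) {m ℓ : ℕ}
    (hℓ : ℓ ≤ 2 * m) : (z.im : ℂ) ^ m * raiseIter (-(2 * m : ℕ)) m (fun w => w ^ ℓ) z ∈ K := by
  have hvalue : (z.im : ℂ) ^ m * raiseIter (-(2 * m : ℕ)) m (fun w => w ^ ℓ) z =
      (-1) ^ m * (m + m).descFactorial m / (m + m).choose ℓ *
        (conjPow m m z).coeff (m + m - ℓ) := by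
    rw [two_mul] at hℓ ⊢
    rw [raiseIter_pow hℓ hz, zpow_neg, zpow_natCast]
    field_simp [ofReal_ne_zero.2 hz]
  rw [hvalue]
  have hscalar : ((-1) ^ m * (m + m).descFactorial m / (m + m).choose ℓ : ℂ) ∈ K :=
    div_mem (mul_mem (pow_mem (neg_mem (one_mem K)) m) (natCast_mem K _)) (natCast_mem K _)
  exact mul_mem hscalar (coeff_conjPow_self_mem K.toSubring htrace hnorm m _)

end PolynomialFamilies

section CMPoint

theorem cmPoint_eq_mk (a b c : ℤ) :
    cmPoint a b c = ⟨-b / (2 * a), √((b ^ 2 - 4 * a * c).natAbs : ℝ) / (2 * a)⟩ := by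
  rw [cmPoint, mk_eq_add_mul_I]
  push_cast
  ring

theorem cmPoint_re (a b c : ℤ) : (cmPoint a b c).re = -b / (2 * a) := by
  rw [cmPoint_eq_mk]

theorem cmPoint_im (a b c : ℤ) :
    (cmPoint a b c).im = √((b ^ 2 - 4 * a * c).natAbs : ℝ) / (2 * a) := by
  rw [cmPoint_eq_mk]

theorem cmPoint_add_conj (a b c : ℤ) :
    cmPoint a b c + starRingEnd ℂ (cmPoint a b c) = ((-b / a : ℚ) : ℂ) := by
  rw [add_conj, cmPoint_re]
  push_cast
  ring

theorem cmPoint_mul_conj (a b c : ℤ) :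
    cmPoint a b c * starRingEnd ℂ (cmPoint a b c) =
      (((b ^ 2 + (b ^ 2 - 4 * a * c).natAbs) / (2 * a) ^ 2 : ℚ) : ℂ) := by
  rw [mul_conj, normSq_apply, cmPoint_re, cmPoint_im, div_mul_div_comm, div_mul_div_comm,
    Real.mul_self_sqrt (Nat.cast_nonneg _)]
  push_cast
  ring

theorem natAbs_discr_rpow_eq {a : ℤ} (ha : a ≠ 0) (b c : ℤ) (m : ℕ) :
    ((b ^ 2 - 4 * a * c).natAbs : ℝ) ^ ((m : ℝ) / 2) = (2 * a * (cmPoint a b c).im) ^ m := by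
  have h2a : (2 * a : ℝ) ≠ 0 := by positivity
  rw [cmPoint_im, mul_div_cancel₀ _ h2a, Real.rpow_div_two_eq_sqrt _ (Nat.cast_nonneg _),
    Real.rpow_natCast]

end CMPoint

/-- When `a` and `d = b ^ 2 - 4 * a * c` are positive, `cmPoint a b c` is the CM point of the form
`[4a², 4ab, b² + d]` of discriminant `-16a²d`. -/
theorem raised_tau_pow_rational_at_CM_general (k ℓ : ℕ) (hk : 1 ≤ k) (hℓ : ℓ ≤ 2 * k - 2)
    (a b c : ℤ) (ha : a ≠ 0) (hd : b ^ 2 - 4 * a * c ≠ 0) :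
    ∃ q : ℚ,
      (((((b ^ 2 - 4 * a * c).natAbs : ℝ)) ^ (((k : ℝ) - 1) / 2) : ℝ) : ℂ) *
        raiseIter (2 - 2 * k) (k - 1) (fun w => w ^ ℓ) (cmPoint a b c) = (q : ℂ) := by
  obtain ⟨m, rfl⟩ := Nat.exists_eq_add_of_le' hk
  let K : Subfield ℂ := (algebraMap ℚ ℂ).fieldRange
  have him : (cmPoint a b c).im ≠ 0 := by
    rw [cmPoint_im]
    positivity
  have hmem := im_pow_mul_raiseIter_pow_mem K him ⟨_, (cmPoint_add_conj a b c).symm⟩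
    ⟨_, (cmPoint_mul_conj a b c).symm⟩ (m := m) (ℓ := ℓ) (by omega)
  obtain ⟨q, hq⟩ := mul_mem (pow_mem (mul_mem (natCast_mem K 2) (intCast_mem K a)) m) hmem
  have hweight : 2 - 2 * ((m + 1 : ℕ) : ℤ) = -(2 * m : ℕ) := by push_cast; ring
  have hexp : (((m + 1 : ℕ) : ℝ) - 1) / 2 = (m : ℝ) / 2 := by push_cast; ring
  refine ⟨q, ?_⟩
  rw [hweight, hexp, natAbs_discr_rpow_eq ha, Nat.add_sub_cancel, ← eq_ratCast (algebraMap ℚ ℂ), hq]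
  push_cast
  ring

/-- rationality of `|d|^{(k-1)/2} (R_{2-2k}^{k-1} τ^ℓ)(τ₀)` at CM points. -/
theorem raised_tau_pow_rational_at_CM (k ℓ : ℕ) (hk : 2 ≤ k) (hℓ : ℓ ≤ 2 * k - 2)
    (a b c : ℤ) (ha : 0 < a) (hd : b ^ 2 - 4 * a * c < 0) :
    ∃ q : ℚ,
      (((((b ^ 2 - 4 * a * c).natAbs : ℝ)) ^ (((k : ℝ) - 1) / 2) : ℝ) : ℂ) *
        raiseIter (2 - 2 * k) (k - 1) (fun w => w ^ ℓ) (cmPoint a b c) = (q : ℂ) :=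
  raised_tau_pow_rational_at_CM_general k ℓ (by omega) hℓ a b c ha.ne' hd.ne

end LHMF
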